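/- For every infinite cardinal λ there exists a compact Hausdorff topological space X that is scattered (every nonempty subset of X has a point which is isolated in the subspace topology) and Fréchet–Urysohn, such that the Banach algebra C(X,ℝ) has a dense subset of cardinality at most 2^λ and, for every real Banach space E having a dense subset of cardinality at most λ, C(X,ℝ) is not isomorphic as a ring to the Calkin algebra B(E)/K(E). -/

import Mathlib

open Cardinal

/-- The two-sided ideal of compact operators in `B(E)`, the algebra of bounded linear
operators on `E`. -/
def compactIdeal (𝕜 : Type*) [NontriviallyNormedField 𝕜]
    (E : Type*) [NormedAddCommGroup E] [NormedSpace 𝕜 E] : TwoSidedIdeal (E →L[𝕜] E) :=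
  TwoSidedIdeal.mk' {f : E →L[𝕜] E | IsCompactOperator f}
    isCompactOperator_zero
    (fun hf hg => hf.add hg)
    (fun hf => hf.neg)
    (fun {f _} hg => hg.clm_comp f)
    (fun {_ g} hf => hf.comp_clm g)

/-- The Calkin algebra `B(E)/K(E)`, as a quotient ring. -/
def Calkin (𝕜 : Type*) [NontriviallyNormedField 𝕜]
    (E : Type*) [NormedAddCommGroup E] [NormedSpace 𝕜 E] : Type _ :=
  (compactIdeal 𝕜 E).ringCon.Quotient

noncomputable instance (𝕜 : Type*) [NontriviallyNormedField 𝕜]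
    (E : Type*) [NormedAddCommGroup E] [NormedSpace 𝕜 E] : Ring (Calkin 𝕜 E) :=
  inferInstanceAs (Ring (compactIdeal 𝕜 E).ringCon.Quotient)

/-- A topological space is scattered if every nonempty subset has a point which is isolated
in the subspace topology. -/
def IsScatteredSpace (X : Type*) [TopologicalSpace X] : Prop :=
  ∀ S : Set X, S.Nonempty → ∃ x ∈ S, ∃ U : Set X, IsOpen U ∧ U ∩ S = {x}

/-!
A Banach space of density at most `λ` is determined up to isometry, hence up to linear isometry by
Mazur–Ulam, by the distances within a dense family indexed by `λ`. So there are at most `2 ^ λ`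
Calkin algebras in question, and by Gelfand–Kolmogorov each of them is `C(Y, ℝ)` for at most one
compact Hausdorff space `Y`. Let `X` be the one-point compactification of the disjoint union of
countably many copies of each such `Y` that is scattered, Fréchet–Urysohn and of cardinality at most
`2 ^ λ`. Then `X` has these three properties as well, yet it is homeomorphic to none of the `Y`:
composing an injection `X → Y` with the inclusions of the copies of `Y` in `X` would give continuous
injections of `X` into itself that miss `∞` and converge to `∞` at `∞`, and the orbit of `∞` under
these maps would have no isolated point.
-/

open Filter Topology

universe u

section ScatteredSpace

variable {X : Type*} [TopologicalSpace X]

theorem IsScatteredSpace.exists_isolated_of_isOpenMap {Z : Type*} [TopologicalSpace Z]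
    (hX : IsScatteredSpace X) {e : X → Z} (he : IsOpenMap e) {S : Set Z}
    (hS : (e ⁻¹' S).Nonempty) : ∃ z ∈ S, ∃ U : Set Z, IsOpen U ∧ U ∩ S = {z} := by
  obtain ⟨x, hxS, U, hU, hUS⟩ := hX _ hS
  refine ⟨e x, hxS, e '' U, he U hU, ?_⟩
  rw [← Set.image_inter_preimage, hUS, Set.image_singleton]

theorem IsScatteredSpace.sigma {I : Type*} {Y : I → Type*} [∀ i, TopologicalSpace (Y i)]
    (hY : ∀ i, IsScatteredSpace (Y i)) : IsScatteredSpace (Σ i, Y i) := by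
  rintro S ⟨⟨i, y⟩, hy⟩
  exact (hY i).exists_isolated_of_isOpenMap isOpenMap_sigmaMk ⟨y, hy⟩

theorem IsScatteredSpace.onePoint (hX : IsScatteredSpace X) : IsScatteredSpace (OnePoint X) := by
  intro S hS
  by_cases hcoe : (((↑) : X → OnePoint X) ⁻¹' S).Nonempty
  · exact hX.exists_isolated_of_isOpenMap OnePoint.isOpenMap_coe hcoe
  · have hS_infty : S = {OnePoint.infty} := by
      refine hS.subset_singleton_iff.1 fun z hz => ?_
      induction z using OnePoint.rec with
      | infty => rfl
      | coe x => exact (hcoe ⟨x, hz⟩).elim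
    exact ⟨OnePoint.infty, by simp [hS_infty], Set.univ, isOpen_univ, by simp [hS_infty]⟩

theorem IsScatteredSpace.not_tendsto_of_injective (hX : IsScatteredSpace X) {p : X}
    {h : ℕ → X → X} (hcont : ∀ n, Continuous (h n)) (hinj : ∀ n, Function.Injective (h n))
    (hne : ∀ n, h n p ≠ p) : ¬ Tendsto (fun n => h n p) atTop (𝓝 p) := by
  intro hlim
  have hword (l : List ℕ) : Continuous (l.foldr h) ∧ Function.Injective (l.foldr h) := by
    induction l with
    | nil => exact ⟨continuous_id, Function.injective_id⟩
    | cons n l ih => exact ⟨(hcont n).comp ih.1, (hinj n).comp ih.2⟩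
  obtain ⟨_, ⟨l, rfl⟩, U, hU, hUS⟩ :=
    hX (Set.range fun l : List ℕ => l.foldr h p) (Set.range_nonempty _)
  have hlU : l.foldr h p ∈ U := (hUS.ge rfl).1
  have hlim' : Tendsto (fun n => l.foldr h (h n p)) atTop (𝓝 (l.foldr h p)) :=
    ((hword l).1.tendsto p).comp hlim
  obtain ⟨n, hn⟩ := (hlim'.eventually (hU.mem_nhds hlU)).exists
  have horbit : l.foldr h (h n p) ∈ Set.range fun l : List ℕ => l.foldr h p :=
    ⟨l ++ [n], by simp⟩
  exact hne n ((hword l).2 (hUS.le ⟨hn, horbit⟩))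

end ScatteredSpace

section OnePointSigma

theorem mem_seqClosure_of_isOpenMap {X Z : Type*} [TopologicalSpace X] [TopologicalSpace Z]
    [FrechetUrysohnSpace X] {e : X → Z} (he : Continuous e) (he' : IsOpenMap e) {A : Set Z} {x : X}
    (hx : e x ∈ closure A) : e x ∈ seqClosure A := by
  have hx' : x ∈ closure (e ⁻¹' A) := by
    rwa [← he'.preimage_closure_eq_closure_preimage he]
  obtain ⟨s, hsA, hs⟩ := mem_closure_iff_seq_limit.1 hx'
  exact ⟨e ∘ s, hsA, (he.tendsto x).comp hs⟩

variable {I : Type*} {Y : I → Type*} [∀ i, TopologicalSpace (Y i)]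

theorem weaklyLocallyCompactSpace_sigma [∀ i, WeaklyLocallyCompactSpace (Y i)] :
    WeaklyLocallyCompactSpace (Σ i, Y i) where
  exists_compact_mem_nhds := by
    rintro ⟨i, y⟩
    obtain ⟨K, hK, hKy⟩ := exists_compact_mem_nhds y
    exact ⟨Sigma.mk i '' K, hK.image continuous_sigmaMk, isOpenMap_sigmaMk.image_mem_nhds hKy⟩

variable [∀ i, CompactSpace (Y i)]

theorem coclosedCompact_sigma : coclosedCompact (Σ i, Y i) = comap Sigma.fst cofinite := by
  refine hasBasis_coclosedCompact.ext (hasBasis_cofinite.comap Sigma.fst) ?_ ?_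
  · rintro K ⟨-, hK⟩
    obtain ⟨s, t, hs, -, rfl⟩ := hK.sigma_exists_finite_sigma_eq
    exact ⟨s, hs, fun z hz hzK => hz hzK.1⟩
  · intro s hs
    have hpre : Sigma.fst ⁻¹' s = s.sigma fun i => (Set.univ : Set (Y i)) := by ext; simp
    refine ⟨Sigma.fst ⁻¹' s, ⟨?_, ?_⟩, subset_rfl⟩
    · exact isClosed_sigma_iff.2 fun i => isClosed_const (p := i ∈ s)
    · exact hpre ▸ Set.isCompact_sigma hs fun i _ => isCompact_univ

theorem tendsto_coe_sigma_nhds_infty {α : Type*} {l : Filter α} {z : α → Σ i, Y i}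
    (hz : Tendsto (fun a => (z a).1) l cofinite) :
    Tendsto (fun a => (z a : OnePoint (Σ i, Y i))) l (𝓝 OnePoint.infty) :=
  OnePoint.tendsto_coe_infty.comp (coclosedCompact_sigma (Y := Y) ▸ tendsto_comap_iff.2 hz)

theorem infty_mem_seqClosure_of_mem_closure {A : Set (OnePoint (Σ i, Y i))}
    (hA : OnePoint.infty ∈ closure A) : OnePoint.infty ∈ seqClosure A := by
  rw [mem_closure_iff_frequently, OnePoint.nhds_infty_eq, coclosedCompact_sigma, frequently_sup,
    frequently_map, frequently_comap, frequently_cofinite_iff_infinite, frequently_pure] at hA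
  obtain hinf | hmem := hA
  · let index := hinf.natEmbedding
    choose z hz hzA using fun n => (index n).2
    have hindex : Tendsto (fun n => (z n).1) atTop cofinite := by
      simp only [hz, ← Nat.cofinite_eq_atTop]
      exact (Subtype.val_injective.comp index.injective).tendsto_cofinite
    exact ⟨fun n => z n, hzA, tendsto_coe_sigma_nhds_infty hindex⟩
  · exact subset_seqClosure hmem

theorem frechetUrysohnSpace_onePoint_sigma [∀ i, FrechetUrysohnSpace (Y i)] :
    FrechetUrysohnSpace (OnePoint (Σ i, Y i)) := by
  refine ⟨fun A x hx => ?_⟩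
  induction x using OnePoint.rec with
  | infty => exact infty_mem_seqClosure_of_mem_closure hx
  | coe x =>
    obtain ⟨i, y⟩ := x
    exact mem_seqClosure_of_isOpenMap (e := OnePoint.some ∘ Sigma.mk i)
      (OnePoint.continuous_coe.comp continuous_sigmaMk)
      (OnePoint.isOpenMap_coe.comp isOpenMap_sigmaMk) hx

end OnePointSigma

section Diagonalization

/-- The one-point compactification of the disjoint union of countably many copies of each member
of a family `Y` of spaces. Repeating every member makes the copies of each `Y i` accumulate at
`∞`. -/
abbrev OnePointCopies {I : Type*} (Y : I → Type*) : Type _ :=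
  OnePoint (Σ j : I × ℕ, Y j.1)

section

variable {I : Type*} {Y : I → Type*} [∀ i, TopologicalSpace (Y i)] [∀ i, CompactSpace (Y i)]

theorem OnePointCopies.t2Space [∀ i, T2Space (Y i)] : T2Space (OnePointCopies Y) :=
  have : WeaklyLocallyCompactSpace (Σ j : I × ℕ, Y j.1) := weaklyLocallyCompactSpace_sigma
  inferInstance

theorem OnePointCopies.not_injective_of_continuous (hY : ∀ i, IsScatteredSpace (Y i))
    {i : I} {f : OnePointCopies Y → Y i} (hf : Continuous f) : ¬ Function.Injective f := by
  intro hinj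
  let toCopy (n : ℕ) (x : OnePointCopies Y) : OnePointCopies Y :=
    ((⟨(i, n), f x⟩ : Σ j : I × ℕ, Y j.1) : OnePoint _)
  have hscattered : IsScatteredSpace (OnePointCopies Y) :=
    (IsScatteredSpace.sigma fun _ => hY _).onePoint
  have hindex : Tendsto (fun n : ℕ => (i, n)) atTop cofinite :=
    Nat.cofinite_eq_atTop ▸ (Prod.mk_right_injective i).tendsto_cofinite
  exact hscattered.not_tendsto_of_injective (h := toCopy) (p := OnePoint.infty)
    (fun n => OnePoint.continuous_coe.comp (continuous_sigmaMk.comp hf))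
    (fun n => OnePoint.coe_injective.comp (sigma_mk_injective.comp hinj))
    (fun n => OnePoint.coe_ne_infty _) (tendsto_coe_sigma_nhds_infty hindex)

end

/-- Scattered Fréchet–Urysohn spaces with at most `κ` points. The diagonal argument takes place
within this class, which is stable under `OnePointCopies` for families of at most `κ` compact
spaces. -/
structure IsSmallScattered (κ : Cardinal.{u}) (X : Type u) [TopologicalSpace X] : Prop where
  isScatteredSpace : IsScatteredSpace X
  frechetUrysohnSpace : FrechetUrysohnSpace X
  mk_le : #X ≤ κ

variable {κ : Cardinal.{u}} {I : Type u}

theorem OnePointCopies.mk_le (hκ : ℵ₀ ≤ κ) (hI : #I ≤ κ) {Y : I → Type u} (hY : ∀ i, #(Y i) ≤ κ) :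
    #(OnePointCopies Y) ≤ κ := by
  have hindex : #(I × ℕ) ≤ κ := by
    simpa using mul_le_of_le hκ hI hκ
  have hsigma : #(Σ j : I × ℕ, Y j.1) ≤ κ := calc
    #(Σ j : I × ℕ, Y j.1) = sum fun j : I × ℕ => #(Y j.1) := mk_sigma _
    _ ≤ sum fun _ : I × ℕ => κ := sum_le_sum _ _ fun j => hY j.1
    _ = #(I × ℕ) * κ := sum_const' _ _
    _ ≤ κ := mul_le_of_le hκ hindex le_rfl
  calc
    #(OnePointCopies Y) = #(Σ j : I × ℕ, Y j.1) + 1 := mk_option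
    _ ≤ κ := add_le_of_le hκ hsigma (one_le_aleph0.trans hκ)

theorem IsSmallScattered.onePointCopies (hκ : ℵ₀ ≤ κ) (hI : #I ≤ κ) {Y : I → Type u}
    [∀ i, TopologicalSpace (Y i)] [∀ i, CompactSpace (Y i)]
    (hY : ∀ i, IsSmallScattered κ (Y i)) : IsSmallScattered κ (OnePointCopies Y) where
  isScatteredSpace := (IsScatteredSpace.sigma fun j : I × ℕ => (hY j.1).isScatteredSpace).onePoint
  frechetUrysohnSpace :=
    have (j : I × ℕ) : FrechetUrysohnSpace (Y j.1) := (hY j.1).frechetUrysohnSpace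
    frechetUrysohnSpace_onePoint_sigma
  mk_le := OnePointCopies.mk_le hκ hI fun i => (hY i).mk_le

theorem exists_isSmallScattered_forall_not (hκ : ℵ₀ ≤ κ) (hI : #I ≤ κ)
    (P : I → CompHaus.{u} → Prop) (hP : ∀ i X Y, P i X → P i Y → Nonempty (X ≃ₜ Y)) :
    ∃ X : CompHaus.{u}, IsSmallScattered κ X ∧ ∀ i, ¬ P i X := by
  let J : Type u := {i : I // ∃ Y : CompHaus.{u}, IsSmallScattered κ Y ∧ P i Y}
  choose Y hY hPY using fun j : J => j.2
  have : T2Space (OnePointCopies fun j => Y j) := OnePointCopies.t2Space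
  let X : CompHaus.{u} := CompHaus.of (OnePointCopies fun j => Y j)
  have hX : IsSmallScattered κ X :=
    IsSmallScattered.onePointCopies hκ ((mk_subtype_le _).trans hI) hY
  refine ⟨X, hX, fun i hiX => ?_⟩
  obtain ⟨e⟩ := hP i X _ hiX (hPY ⟨i, X, hX, hiX⟩)
  exact OnePointCopies.not_injective_of_continuous (fun j => (hY j).isScatteredSpace)
    e.continuous e.injective

end Diagonalization

section RealContinuousMap

open WeakDual.CharacterSpace

variable {X Y : Type*} [TopologicalSpace X] [TopologicalSpace Y]

/-- A ring homomorphism between algebras of real continuous functions, as a homomorphism of real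
star algebras; `ℝ`-linearity is automatic because `ℝ` has no nontrivial ring endomorphism. -/
def realStarAlgHom (φ : C(X, ℝ) →+* C(Y, ℝ)) : C(X, ℝ) →⋆ₐ[ℝ] C(Y, ℝ) where
  __ := φ
  commutes' r := by
    ext y
    exact Real.ringHom_apply
      (((ContinuousMap.evalAlgHom ℝ ℝ y : C(Y, ℝ) →+* ℝ).comp φ).comp (algebraMap ℝ C(X, ℝ))) r
  map_star' f := congrArg φ (star_trivial f)

/-- The **Gelfand–Kolmogorov theorem**: the homeomorphism induced by a ring isomorphism through the
identification of points with characters. -/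
noncomputable def homeomorphOfRingEquiv [CompactSpace X] [T2Space X] [CompactSpace Y] [T2Space Y]
    (φ : C(X, ℝ) ≃+* C(Y, ℝ)) : X ≃ₜ Y :=
  (homeoEval X ℝ).trans <| Homeomorph.trans
    { toFun := compContinuousMap (realStarAlgHom (φ.symm : C(Y, ℝ) →+* C(X, ℝ)))
      invFun := compContinuousMap (realStarAlgHom (φ : C(X, ℝ) →+* C(Y, ℝ)))
      left_inv := fun χ => WeakDual.CharacterSpace.ext fun f => congrArg χ (φ.symm_apply_apply f)
      right_inv := fun χ => WeakDual.CharacterSpace.ext fun f => congrArg χ (φ.apply_symm_apply f) }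
    (homeoEval Y ℝ).symm

theorem exists_continuousMap_apply_ne [T35Space X] {x y : X} (hxy : x ≠ y) :
    ∃ f : C(X, ℝ), f x ≠ f y := by
  obtain ⟨f, hf, hne⟩ := separatesPoints_continuous_of_t35Space hxy
  exact ⟨⟨f, hf⟩, hne⟩

theorem exists_dense_continuousMap_mk_le (X : Type u) [TopologicalSpace X] [CompactSpace X]
    [T2Space X] : ∃ D : Set C(X, ℝ), Dense D ∧ #D ≤ max 𝔠 #X := by
  have hsep (p : X × X) : ∃ f : C(X, ℝ), p.1 ≠ p.2 → f p.1 ≠ f p.2 := by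
    by_cases hp : p.1 = p.2
    · exact ⟨0, fun h => (h hp).elim⟩
    · exact (exists_continuousMap_apply_ne hp).imp fun f hf _ => hf
  choose F hF using hsep
  let A : Subalgebra ℝ C(X, ℝ) := Algebra.adjoin ℝ (Set.range F)
  have hA : A.SeparatesPoints := fun x y hxy =>
    ⟨F (x, y), ⟨F (x, y), Algebra.subset_adjoin ⟨_, rfl⟩, rfl⟩, hF (x, y) hxy⟩
  have hcont : ℵ₀ ≤ max 𝔠 #X := aleph0_le_continuum.trans (le_max_left _ _)
  have hrange : #(Set.range F) ≤ max 𝔠 #X := calc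
    #(Set.range F) ≤ #(X × X) := mk_range_le
    _ = #X * #X := by rw [mk_prod, lift_id]
    _ ≤ max 𝔠 #X := mul_le_of_le hcont (le_max_right _ _) (le_max_right _ _)
  refine ⟨A, ?_, ?_⟩
  · rw [dense_iff_closure_eq, ← Subalgebra.topologicalClosure_coe,
      ContinuousMap.subalgebra_topologicalClosure_eq_top_of_separatesPoints A hA, Algebra.coe_top]
  · calc
      #A ≤ max (max 𝔠 #(Set.range F)) ℵ₀ := by
        simpa only [lift_uzero, lift_id'.{0, u}, mk_real, lift_continuum] using
          Algebra.lift_cardinalMk_adjoin_le ℝ (Set.range F)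
      _ ≤ max 𝔠 #X := max_le (max_le (le_max_left _ _) hrange) hcont

end RealContinuousMap

section DenseFamily

theorem exists_denseRange_of_mk_le {E : Type*} {ι : Type u} [TopologicalSpace E] [Nonempty E]
    {D : Set E} (hD : Dense D) (hι : lift.{u} #D ≤ lift #ι) : ∃ f : ι → E, DenseRange f := by
  have : Nonempty D := hD.nonempty.to_subtype
  obtain ⟨k⟩ := lift_mk_le'.1 hι
  have hsurj : Function.Surjective (Function.invFun k) := Function.invFun_surjective k.injective
  refine ⟨Subtype.val ∘ Function.invFun k, ?_⟩
  exact hD.denseRange_val.comp hsurj.denseRange continuous_subtype_val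

theorem nonempty_isometryEquiv_completion {ι E : Type*} [PseudoMetricSpace ι] [MetricSpace E]
    [CompleteSpace E] {f : ι → E} (hf : Isometry f) (hdense : DenseRange f) :
    Nonempty (UniformSpace.Completion ι ≃ᵢ E) := by
  have hiso : Isometry (UniformSpace.Completion.extension f) := hf.completion_extension
  have hrange : Set.range f ⊆ Set.range (UniformSpace.Completion.extension f) := by
    rintro _ ⟨i, rfl⟩
    exact ⟨i, UniformSpace.Completion.extension_coe hf.uniformContinuous i⟩
  have hsurj : Function.Surjective (UniformSpace.Completion.extension f) := by
    rw [← Set.range_eq_univ, ← hiso.isClosedEmbedding.isClosed_range.closure_eq]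
    exact (hdense.mono hrange).closure_eq
  exact ⟨⟨Equiv.ofBijective _ ⟨hiso.injective, hsurj⟩, hiso⟩⟩

theorem nonempty_isometryEquiv_of_dist_eq {ι E F : Type*} [MetricSpace E] [CompleteSpace E]
    [MetricSpace F] [CompleteSpace F] {f : ι → E} {g : ι → F} (hf : DenseRange f)
    (hg : DenseRange g) (hdist : ∀ i j, dist (f i) (f j) = dist (g i) (g j)) :
    Nonempty (E ≃ᵢ F) := by
  let _ : PseudoMetricSpace ι := .induced f inferInstance
  obtain ⟨e⟩ := nonempty_isometryEquiv_completion (f := f) (.of_dist_eq fun _ _ => rfl) hf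
  obtain ⟨e'⟩ := nonempty_isometryEquiv_completion (.of_dist_eq fun i j => (hdist i j).symm) hg
  exact ⟨e.symm.trans e'⟩

end DenseFamily

section Calkin

variable {𝕜 : Type*} [NontriviallyNormedField 𝕜]
  {E : Type*} [NormedAddCommGroup E] [NormedSpace 𝕜 E]
  {F : Type*} [NormedAddCommGroup F] [NormedSpace 𝕜 F]

theorem mem_compactIdeal {f : E →L[𝕜] E} : f ∈ compactIdeal 𝕜 E ↔ IsCompactOperator f :=
  TwoSidedIdeal.mem_mk' _ _ _ _ _ _ _

theorem isCompactOperator_conj_iff (e : E ≃L[𝕜] F) {f : E →L[𝕜] E} :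
    IsCompactOperator (e.conjContinuousAlgEquiv f) ↔ IsCompactOperator f := by
  refine ⟨fun h => ?_, fun h => ?_⟩
  · have hconj := (h.comp_clm (e : E →L[𝕜] F)).clm_comp (e.symm : F →L[𝕜] E)
    convert! hconj using 1
    ext v
    simp
  · exact (h.comp_clm (e.symm : F →L[𝕜] E)).clm_comp (e : E →L[𝕜] F)

/-- Isomorphic normed spaces have isomorphic Calkin algebras, by conjugation. -/
noncomputable def calkinCongr (e : E ≃L[𝕜] F) : Calkin 𝕜 E ≃+* Calkin 𝕜 F :=
  RingCon.congr (e.conjContinuousAlgEquiv : (E →L[𝕜] E) ≃+* (F →L[𝕜] F)) <| by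
    ext f g
    rw [RingCon.comap_rel, TwoSidedIdeal.rel_iff, TwoSidedIdeal.rel_iff, ← map_sub,
      mem_compactIdeal, mem_compactIdeal]
    exact (isCompactOperator_conj_iff e).symm

/-- `C(X, ℝ)` is the Calkin algebra of some real Banach space with a dense family whose distances
are given by `d`. Such distance functions serve as codes for the isometry types of the Banach
spaces of bounded density. -/
def IsCalkinSpectrum {ι : Type u} (d : ι → ι → ℝ) (X : Type*) [TopologicalSpace X] : Prop :=
  ∃ (E : Type u) (_ : NormedAddCommGroup E) (_ : NormedSpace ℝ E) (_ : CompleteSpace E)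
    (f : ι → E), DenseRange f ∧ (∀ i j, dist (f i) (f j) = d i j) ∧
      Nonempty (C(X, ℝ) ≃+* Calkin ℝ E)

theorem IsCalkinSpectrum.nonempty_homeomorph {ι : Type u} {d : ι → ι → ℝ}
    {X : Type*} [TopologicalSpace X] [CompactSpace X] [T2Space X]
    {Y : Type*} [TopologicalSpace Y] [CompactSpace Y] [T2Space Y]
    (hX : IsCalkinSpectrum d X) (hY : IsCalkinSpectrum d Y) : Nonempty (X ≃ₜ Y) := by
  obtain ⟨E, _, _, _, f, hf, hfd, ⟨φ⟩⟩ := hX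
  obtain ⟨F, _, _, _, g, hg, hgd, ⟨ψ⟩⟩ := hY
  obtain ⟨e⟩ := nonempty_isometryEquiv_of_dist_eq hf hg fun i j => (hfd i j).trans (hgd i j).symm
  let c : Calkin ℝ E ≃+* Calkin ℝ F :=
    calkinCongr e.toRealLinearIsometryEquiv.toContinuousLinearEquiv
  exact ⟨homeomorphOfRingEquiv ((φ.trans c).trans ψ.symm)⟩

theorem mk_arrow_arrow_real {ι : Type u} [Infinite ι] : #(ι → ι → ℝ) = 2 ^ #ι := by
  have hι : ℵ₀ ≤ #ι := aleph0_le_mk ι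
  have hreal : #(ι → ℝ) = 2 ^ #ι := by
    rw [mk_arrow, mk_real, lift_continuum, lift_uzero, ← two_power_aleph0, ← power_mul,
      aleph0_mul_eq hι]
  rw [← power_def, hreal, ← power_mul, mul_eq_self hι]

end Calkin

/-- For every infinite cardinal `λ` there exists a compact Hausdorff space `X` which is
scattered and Fréchet–Urysohn, such that the Banach algebra `C(X, ℝ)` has a dense subset of
cardinality at most `2 ^ λ` and, for every real Banach space `E` having a dense subset of
cardinality at most `λ`, `C(X, ℝ)` is not isomorphic as a ring to the Calkin algebra
`B(E)/K(E)`. -/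
theorem statement2 (lam : Cardinal.{u}) (hlam : Cardinal.aleph0 ≤ lam) :
    ∃ X : CompHaus.{u},
      IsScatteredSpace X ∧ FrechetUrysohnSpace X ∧
      (∃ D : Set C(X, ℝ), Dense D ∧ #D ≤ 2 ^ lam) ∧
      ∀ (E : Type u) [NormedAddCommGroup E] [NormedSpace ℝ E] [CompleteSpace E],
        (∃ D : Set E, Dense D ∧ #D ≤ lam) →
        IsEmpty (C(X, ℝ) ≃+* Calkin ℝ E) := by
  induction lam using inductionOn with | _ ι
  have : Infinite ι := infinite_iff.2 hlam
  obtain ⟨X, hX, hX_not⟩ := exists_isSmallScattered_forall_not (hlam.trans (cantor _).le)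
    mk_arrow_arrow_real.le (fun (d : ι → ι → ℝ) X => IsCalkinSpectrum d X)
    fun d X Y => IsCalkinSpectrum.nonempty_homeomorph
  refine ⟨X, hX.isScatteredSpace, hX.frechetUrysohnSpace, ?_, fun E _ _ _ ⟨D, hD, hDι⟩ => ⟨?_⟩⟩
  · obtain ⟨D, hD, hDX⟩ := exists_dense_continuousMap_mk_le X
    have hcont : 𝔠 ≤ 2 ^ #ι := two_power_aleph0 ▸ power_le_power_left two_ne_zero hlam
    exact ⟨D, hD, hDX.trans (max_le hcont hX.mk_le)⟩
  · intro φ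
    obtain ⟨f, hf⟩ := exists_denseRange_of_mk_le hD (lift_le.2 hDι)
    exact hX_not _ ⟨E, _, _, ‹_›, f, hf, fun i j => rfl, ⟨φ⟩⟩
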